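/- arXiv:2509.21580 — 14 statements merged into one kernel-verified Lean document; each statement's English description precedes it below -/
import Mathlib

section
/- Let X be a normed space, C ⊆ X a convex set, h : C → ℝ, and γ > 0. Then h is strongly quasiconvex with modulus γ if and only if for every x, y ∈ C and every z ∈ [x, y] (i.e., z = x + t(y − x) for some t ∈ [0,1]), the implication h(x) ≤ h(y) ⟹ h(y) ≥ h(z) + (γ/2)‖z − x‖·‖y − z‖ holds. -/
/-!
For `z = x + t (y - x)` one has `‖z - x‖ = t ‖y - x‖` and `‖y - z‖ = (1 - t) ‖y - x‖`, so the two
quadratic terms agree (`segment_norm_mul_norm`). Since `max (h x) (h y) = h y` when `h x ≤ h y`,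
the two conditions coincide for such pairs; the remaining pairs follow by exchanging `x` and `y`,
as both conditions are stated for all ordered pairs.
-/

open Set

/-- On the segment from `x` to `y`, the product of the distances from the point at parameter `t`
to the endpoints is exactly the quadratic term in the definition of strong quasiconvexity. -/
lemma segment_norm_mul_norm {X : Type*} [NormedAddCommGroup X] [NormedSpace ℝ X]
    (x y : X) {t : ℝ} (ht : t ∈ Icc (0 : ℝ) 1) :
    ‖(x + t • (y - x)) - x‖ * ‖y - (x + t • (y - x))‖ = t * (1 - t) * ‖y - x‖ ^ 2 := by
  have h1 : (x + t • (y - x)) - x = t • (y - x) := by abel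
  have h2 : y - (x + t • (y - x)) = (1 - t) • (y - x) := by module
  rw [h1, h2, norm_smul, norm_smul, Real.norm_of_nonneg ht.1,
    Real.norm_of_nonneg (sub_nonneg.2 ht.2)]
  ring

/-- Let `X` be a normed space, `C ⊆ X` convex, `h : C → ℝ`, `γ > 0`.
Then `h` is strongly quasiconvex with modulus `γ` iff for every `x, y ∈ C` and every
`z = x + t (y - x)` with `t ∈ [0,1]`, `h x ≤ h y` implies
`h y ≥ h z + (γ/2) ‖z - x‖ ‖y - z‖`. -/
theorem stmt0 {X : Type*} [NormedAddCommGroup X] [NormedSpace ℝ X]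
    (C : Set X) (hC : Convex ℝ C) (h : X → ℝ) (γ : ℝ) (hγ : 0 < γ) :
    (∀ x ∈ C, ∀ y ∈ C, ∀ t ∈ Icc (0 : ℝ) 1,
        h (x + t • (y - x)) ≤ max (h x) (h y) - γ / 2 * (t * (1 - t) * ‖y - x‖ ^ 2)) ↔
    (∀ x ∈ C, ∀ y ∈ C, ∀ t ∈ Icc (0 : ℝ) 1, h x ≤ h y →
        h y ≥ h (x + t • (y - x)) +
          γ / 2 * (‖(x + t • (y - x)) - x‖ * ‖y - (x + t • (y - x))‖)) := by
  constructor
  · intro H x hx y hy t ht hxy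
    have h1 := H x hx y hy t ht
    rw [max_eq_right hxy] at h1
    rw [segment_norm_mul_norm x y ht]
    linarith
  · intro H x hx y hy t ht
    rcases le_total (h x) (h y) with hxy | hxy
    · have h1 := H x hx y hy t ht hxy
      rw [segment_norm_mul_norm x y ht] at h1
      rw [max_eq_right hxy]
      linarith
    · -- Swapping the endpoints replaces the parameter `t` by `1 - t`.
      have ht' : 1 - t ∈ Icc (0 : ℝ) 1 := ⟨sub_nonneg.2 ht.2, by linarith [ht.1]⟩
      have h1 := H y hy x hx (1 - t) ht' hxy
      rw [segment_norm_mul_norm y x ht', norm_sub_rev x y,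
        show y + (1 - t) • (x - y) = x + t • (y - x) by module] at h1
      rw [max_eq_left hxy]
      linarith
end

section
/- Let X be a normed space, C ⊆ X a convex set, and h : C → ℝ strongly quasiconvex with modulus γ > 0. Then for every x, y ∈ C and every z = x + t(y − x) with 0 < t ≤ 1, if h(x) ≤ h(z) then h(z) ≤ h(y) − (γ/4)(1 − t²)‖y − x‖², equivalently h(z) ≤ h(y) − (γ/4)(‖y − x‖² − ‖z − x‖²). (No continuity assumption on h is required.) -/
/-!
Restrict `h` to the segment: `φ s = h (x + s (y - x))` and `N = ‖y - x‖²`, with `N > 0` (the case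
`y = x` is trivial). Comparing `r ∈ (0, s)` with the endpoints `0` and `s`, strong quasiconvexity
reads `φ r ≤ max (φ 0) (φ s) - (γ/2) N r (s - r)`, with a strictly positive penalty. Since
`φ 0 ≤ φ t`, this forces `φ 0 ≤ φ t ≤ φ r` for all `r ∈ [t, 1]`, so the maximum is always `φ s` and
`φ r ≤ φ s - (γ/2) N r (s - r)` whenever `t ≤ r ≤ s ≤ 1`. Summing this over a fine partition of
`[t, 1]` gives a Riemann sum for `(γ/2) N ∫ r dr = (γ/4) N (1 - t²)`; the limit is taken by
repeated bisection in `le_sub_sq_of_local`.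
-/

open Set

/-- Integration of the discrete growth condition `φ r + 2 K r (s - r) ≤ φ s`: since
`2 r (s - r) = (s² - r²) - (s - r)²`, each bisection halves the quadratic error. No regularity of
`φ` is involved. -/
lemma le_sub_sq_of_local (φ : ℝ → ℝ) (K t : ℝ)
    (hφ : ∀ r s, t ≤ r → r ≤ s → s ≤ 1 → φ r ≤ φ s - 2 * K * (r * (s - r))) (ht : t ≤ 1) :
    φ t ≤ φ 1 - K * (1 - t ^ 2) := by
  have key : ∀ n : ℕ, ∀ r s, t ≤ r → r ≤ s → s ≤ 1 →
      φ r ≤ φ s - K * (s ^ 2 - r ^ 2) + K * (s - r) ^ 2 * (1 / 2) ^ n := by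
    intro n
    induction n with
    | zero =>
      intro r s h1 h2 h3
      have := hφ r s h1 h2 h3
      simp only [pow_zero]
      linarith
    | succ n ih =>
      intro r s h1 h2 h3
      have a := ih r ((r + s) / 2) h1 (by linarith) (by linarith)
      have b := ih ((r + s) / 2) s (by linarith) (by linarith) h3
      rw [pow_succ (1 / 2 : ℝ) n]
      generalize (1 / 2 : ℝ) ^ n = q at a b ⊢
      linarith
  have hlim : Filter.Tendsto
      (fun n : ℕ => φ 1 - K * (1 ^ 2 - t ^ 2) + K * (1 - t) ^ 2 * (1 / 2 : ℝ) ^ n)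
      Filter.atTop (nhds (φ 1 - K * (1 ^ 2 - t ^ 2) + K * (1 - t) ^ 2 * 0)) :=
    ((tendsto_pow_atTop_nhds_zero_of_lt_one (by norm_num) (by norm_num)).const_mul _).const_add _
  have := ge_of_tendsto' hlim (fun n => key n t 1 le_rfl ht le_rfl)
  linarith

/-- If `h` is strongly quasiconvex with modulus `γ > 0` on a convex set `C`,
then for all `x, y ∈ C` and `z = x + t (y - x)` with `0 < t ≤ 1`, `h x ≤ h z` implies
`h z ≤ h y - (γ/4) (1 - t²) ‖y - x‖²`, equivalently
`h z ≤ h y - (γ/4) (‖y - x‖² - ‖z - x‖²)`. No continuity assumption is needed. -/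
theorem stmt1 {X : Type*} [NormedAddCommGroup X] [NormedSpace ℝ X]
    (C : Set X) (hC : Convex ℝ C) (h : X → ℝ) (γ : ℝ) (hγ : 0 < γ)
    (hsq : ∀ x ∈ C, ∀ y ∈ C, ∀ t ∈ Icc (0 : ℝ) 1,
      h (x + t • (y - x)) ≤ max (h x) (h y) - γ / 2 * (t * (1 - t) * ‖y - x‖ ^ 2)) :
    ∀ x ∈ C, ∀ y ∈ C, ∀ t : ℝ, 0 < t → t ≤ 1 →
      h x ≤ h (x + t • (y - x)) →
      h (x + t • (y - x)) ≤ h y - γ / 4 * ((1 - t ^ 2) * ‖y - x‖ ^ 2) ∧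
      h (x + t • (y - x)) ≤ h y - γ / 4 * (‖y - x‖ ^ 2 - ‖(x + t • (y - x)) - x‖ ^ 2) := by
  intro x hx y hy t ht0 ht1 hxz
  have hnorm : ‖(x + t • (y - x)) - x‖ ^ 2 = t ^ 2 * ‖y - x‖ ^ 2 := by
    rw [add_sub_cancel_left, norm_smul, mul_pow, Real.norm_eq_abs, sq_abs]
  suffices hmain : h (x + t • (y - x)) ≤ h y - γ / 4 * ((1 - t ^ 2) * ‖y - x‖ ^ 2) by
    refine ⟨hmain, ?_⟩
    rw [hnorm]
    linarith
  rcases eq_or_ne y x with rfl | hne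
  · simp
  have hN : 0 < ‖y - x‖ ^ 2 := by
    have := norm_pos_iff.mpr (sub_ne_zero.mpr hne)
    positivity
  have hseg : ∀ r s : ℝ, 0 < r → r ≤ s → s ≤ 1 → h (x + r • (y - x)) ≤
      max (h x) (h (x + s • (y - x))) - γ / 2 * (r * (s - r) * ‖y - x‖ ^ 2) := by
    intro r s hr hrs hs
    have hs0 : 0 < s := hr.trans_le hrs
    have hmem : x + s • (y - x) ∈ C := hC.add_smul_sub_mem hx hy ⟨hs0.le, hs⟩
    have := hsq x hx _ hmem (r / s) ⟨by positivity, (div_le_one hs0).mpr hrs⟩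
    rw [add_sub_cancel_left, smul_smul, div_mul_cancel₀ _ hs0.ne', norm_smul, mul_pow,
      Real.norm_eq_abs, sq_abs] at this
    have e : r / s * (1 - r / s) * (s ^ 2 * ‖y - x‖ ^ 2) = r * (s - r) * ‖y - x‖ ^ 2 := by
      field_simp
    rwa [e] at this
  -- The positive penalty rules out that `h x` realizes the maximum.
  have hstep : ∀ r s : ℝ, 0 < r → r ≤ s → s ≤ 1 → h x ≤ h (x + r • (y - x)) →
      h (x + r • (y - x)) ≤ h (x + s • (y - x)) - γ / 2 * (r * (s - r) * ‖y - x‖ ^ 2) := by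
    intro r s hr hrs hs hxr
    rcases hrs.eq_or_lt with rfl | hlt
    · simp
    have h1 := hseg r s hr hrs hs
    have hpos : 0 < γ / 2 * (r * (s - r) * ‖y - x‖ ^ 2) := by
      have := sub_pos.mpr hlt
      positivity
    rcases max_cases (h x) (h (x + s • (y - x))) with ⟨e, _⟩ | ⟨e, _⟩ <;> rw [e] at h1 <;> linarith
  have hmono : ∀ r : ℝ, t ≤ r → r ≤ 1 → h x ≤ h (x + r • (y - x)) := by
    intro r htr hr
    have h1 := hstep t r ht0 htr hr hxz
    have hnn : 0 ≤ γ / 2 * (t * (r - t) * ‖y - x‖ ^ 2) := by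
      have := sub_nonneg.mpr htr
      positivity
    linarith
  have := le_sub_sq_of_local (fun s => h (x + s • (y - x))) (γ / 4 * ‖y - x‖ ^ 2) t
    (fun r s h1 h2 h3 => by
      have := hstep r s (ht0.trans_le h1) h2 h3 (hmono r h1 (h2.trans h3))
      linarith) ht1
  simp only [one_smul, add_sub_cancel] at this
  linarith
end

section
/- Let X be a normed space, C ⊆ X a convex set, γ > 0, and h : C → ℝ a function that is continuous along line segments of C. Suppose that for every x, y ∈ C and every z = x + t(y − x) with 0 < t ≤ 1, the implication h(x) ≤ h(z) ⟹ h(z) ≤ h(y) − (γ/4)(1 − t²)‖y − x‖² holds. Then h is strongly quasiconvex with modulus γ/2. -/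
/-!
Restrict `h` to the segment: put `g s = h (x + s • (y - x))` for `s ∈ [0, 1]`. For `t < 1/2`,
compare `g t` with the midpoint value `g (1/2)`.

* If `g t ≤ g (1/2)`, the hypothesis with base point `t`, endpoint `1` and intermediate point
  `1/2` gives `g t ≤ g 1 - (γ/4) (3/4 - t) ‖y - x‖²`, and `3/4 - t ≥ t (1 - t)`.
* If `g (1/2) ≤ g t`, the hypothesis with base point `1/2`, endpoint `0` and intermediate point
  `t` gives exactly `g t ≤ g 0 - (γ/4) t (1 - t) ‖y - x‖²`.

The range `t > 1/2` follows by exchanging `x` and `y`, and `t = 1/2` by continuity of `g`.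
-/

open Set

/-- The bound on the half of the segment next to `x`, the midpoint excluded; continuity of `h`
plays no role here. -/
theorem strong_quasiconvex_of_lt_half {X : Type*} [NormedAddCommGroup X] [NormedSpace ℝ X]
    (C : Set X) (hC : Convex ℝ C) (h : X → ℝ) (γ : ℝ) (hγ : 0 < γ)
    (hyp : ∀ x ∈ C, ∀ y ∈ C, ∀ t : ℝ, 0 < t → t ≤ 1 →
      h x ≤ h (x + t • (y - x)) →
      h (x + t • (y - x)) ≤ h y - γ / 4 * ((1 - t ^ 2) * ‖y - x‖ ^ 2))
    {x y : X} (hx : x ∈ C) (hy : y ∈ C) {t : ℝ} (ht0 : 0 ≤ t) (ht : t < 1 / 2) :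
    h (x + t • (y - x)) ≤ max (h x) (h y) - γ / 2 / 2 * (t * (1 - t) * ‖y - x‖ ^ 2) := by
  have hz : x + t • (y - x) ∈ C := hC.add_smul_sub_mem hx hy ⟨ht0, by linarith⟩
  have hm : x + (1 / 2 : ℝ) • (y - x) ∈ C :=
    hC.add_smul_sub_mem hx hy ⟨by norm_num, by norm_num⟩
  have hL : 0 ≤ ‖y - x‖ ^ 2 := by positivity
  rcases le_total (h (x + t • (y - x))) (h (x + (1 / 2 : ℝ) • (y - x))) with hle | hle
  · have h1t : 0 < 1 - t := by linarith
    have hne : 1 - t ≠ 0 := h1t.ne'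
    -- `r` is the position of the midpoint on the segment from `z = x + t • (y - x)` to `y`.
    obtain ⟨r, hr⟩ : ∃ r : ℝ, r = (1 / 2 - t) / (1 - t) := ⟨_, rfl⟩
    have hrm : r * (1 - t) = 1 / 2 - t := by rw [hr]; field_simp
    have hr0 : 0 < r := by rw [hr]; exact div_pos (by linarith) h1t
    have hr1 : r ≤ 1 := by rw [hr, div_le_one h1t]; linarith
    have hsub : y - (x + t • (y - x)) = (1 - t) • (y - x) := by module
    have hpt : x + t • (y - x) + r • (y - (x + t • (y - x))) = x + (1 / 2 : ℝ) • (y - x) := by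
      rw [hsub, smul_smul, hrm]; module
    have key := hyp _ hz y hy r hr0 hr1 (by rw [hpt]; exact hle)
    rw [hpt, hsub, norm_smul, Real.norm_of_nonneg h1t.le] at key
    have hcoef : (1 - r ^ 2) * ((1 - t) * ‖y - x‖) ^ 2 = (3 / 4 - t) * ‖y - x‖ ^ 2 := by
      have : (r * (1 - t)) ^ 2 = (1 / 2 - t) ^ 2 := by rw [hrm]
      linear_combination (-‖y - x‖ ^ 2) * this
    rw [hcoef] at key
    have hcmp : t * (1 - t) * ‖y - x‖ ^ 2 ≤ (3 / 4 - t) * ‖y - x‖ ^ 2 :=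
      mul_le_mul_of_nonneg_right (by nlinarith) hL
    have := mul_le_mul_of_nonneg_left hcmp (by positivity : 0 ≤ γ / 4)
    have := le_max_right (h x) (h y)
    linarith
  · have hsub : x - (x + (1 / 2 : ℝ) • (y - x)) = (-(1 / 2) : ℝ) • (y - x) := by module
    have hpt : x + (1 / 2 : ℝ) • (y - x) + (1 - 2 * t) • (x - (x + (1 / 2 : ℝ) • (y - x)))
        = x + t • (y - x) := by
      module
    have key := hyp _ hm x hx (1 - 2 * t) (by linarith) (by linarith) (by rw [hpt]; exact hle)
    rw [hpt, hsub, norm_smul, norm_neg, Real.norm_of_nonneg (by norm_num)] at key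
    have := le_max_left (h x) (h y)
    linarith

/-- Let `C ⊆ X` be convex, `γ > 0`, and `h` continuous along line segments
of `C`. If for every `x, y ∈ C` and `z = x + t (y - x)` with `0 < t ≤ 1`,
`h x ≤ h z` implies `h z ≤ h y - (γ/4) (1 - t²) ‖y - x‖²`, then `h` is strongly
quasiconvex with modulus `γ/2`. -/
theorem stmt2 {X : Type*} [NormedAddCommGroup X] [NormedSpace ℝ X]
    (C : Set X) (hC : Convex ℝ C) (h : X → ℝ) (γ : ℝ) (hγ : 0 < γ)
    (hcont : ∀ x ∈ C, ∀ y ∈ C,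
      ContinuousOn (fun t : ℝ => h (x + t • (y - x))) (Icc (0 : ℝ) 1))
    (hyp : ∀ x ∈ C, ∀ y ∈ C, ∀ t : ℝ, 0 < t → t ≤ 1 →
      h x ≤ h (x + t • (y - x)) →
      h (x + t • (y - x)) ≤ h y - γ / 4 * ((1 - t ^ 2) * ‖y - x‖ ^ 2)) :
    ∀ x ∈ C, ∀ y ∈ C, ∀ t ∈ Icc (0 : ℝ) 1,
      h (x + t • (y - x)) ≤ max (h x) (h y) - γ / 2 / 2 * (t * (1 - t) * ‖y - x‖ ^ 2) := by
  intro x hx y hy t ht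
  rcases lt_trichotomy t (1 / 2) with hlt | heq | hgt
  · exact strong_quasiconvex_of_lt_half C hC h γ hγ hyp hx hy ht.1 hlt
  · subst heq
    have hcl : (1 / 2 : ℝ) ∈ closure (Ico (0 : ℝ) (1 / 2)) := by
      rw [closure_Ico (by norm_num)]
      exact ⟨by norm_num, le_rfl⟩
    refine ContinuousWithinAt.closure_le (f := fun t : ℝ => h (x + t • (y - x)))
      (g := fun t : ℝ => max (h x) (h y) - γ / 2 / 2 * (t * (1 - t) * ‖y - x‖ ^ 2)) hcl
      ((hcont x hx y hy _ ht).mono fun s hs => ⟨hs.1, by linarith [hs.2]⟩)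
      (by fun_prop) fun s hs => ?_
    exact strong_quasiconvex_of_lt_half C hC h γ hγ hyp hx hy hs.1 hs.2
  · have key := strong_quasiconvex_of_lt_half C hC h γ hγ hyp hy hx (t := 1 - t)
      (by linarith [ht.2]) (by linarith)
    have hpt : y + (1 - t) • (x - y) = x + t • (y - x) := by module
    rw [hpt, max_comm, norm_sub_rev] at key
    linarith
end

section
/- Let X be a normed space, C ⊆ X a convex set, and h : C → ℝ strongly quasiconvex with modulus γ > 0. If x, y ∈ C and z = x + t(y − x) with 0 < t ≤ 1 satisfy h(x) ≤ h(z), then h is nondecreasing along the segment from z to y: for any points w, w' of the form w = z + s(y − z), w' = z + s'(y − z) with 0 ≤ s ≤ s' ≤ 1, one has h(w) ≤ h(w'). In particular h(x) ≤ h(z) ≤ h(y). -/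
/-!
Strong quasiconvexity forces a strict drop below the larger endpoint value at every interior point
of a nondegenerate segment. So if an interior point `w` of `[a, b]` satisfies `h a ≤ h w`, the
larger endpoint value is `h b`, and `h w ≤ h b` (`le_right_of_left_le`). Applied to `z` in `[x, w]`,
this gives `h x ≤ h z ≤ h w` for each `w` in `[z, y]`; applied then to `w` in `[x, w']`,
it gives `h w ≤ h w'`.
-/

open Set

theorem le_right_of_left_le {X : Type*} [NormedAddCommGroup X] [NormedSpace ℝ X]
    {C : Set X} {h : X → ℝ} {γ : ℝ} (hγ : 0 < γ)
    (hsq : ∀ x ∈ C, ∀ y ∈ C, ∀ t ∈ Icc (0 : ℝ) 1,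
      h (x + t • (y - x)) ≤ max (h x) (h y) - γ / 2 * (t * (1 - t) * ‖y - x‖ ^ 2))
    {a b : X} (ha : a ∈ C) (hb : b ∈ C) {u : ℝ} (hu0 : 0 < u) (hu1 : u ≤ 1)
    (hle : h a ≤ h (a + u • (b - a))) : h (a + u • (b - a)) ≤ h b := by
  rcases hu1.eq_or_lt with rfl | hu1
  · simp
  rcases eq_or_ne a b with rfl | hab
  · simp
  have key := hsq a ha b hb u ⟨hu0.le, hu1.le⟩
  have hn : 0 < ‖b - a‖ := norm_pos_iff.mpr (sub_ne_zero.mpr hab.symm)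
  have hu : 0 < 1 - u := by linarith
  have hpos : 0 < γ / 2 * (u * (1 - u) * ‖b - a‖ ^ 2) := by positivity
  rcases max_cases (h a) (h b) with ⟨hm, _⟩ | ⟨hm, _⟩ <;> rw [hm] at key <;> linarith

/-- The same fact for two points of one ray from `x`, given by their parameters `b ≤ c`. -/
theorem ray_le_of_base_le {X : Type*} [NormedAddCommGroup X] [NormedSpace ℝ X]
    {C : Set X} (hC : Convex ℝ C) {h : X → ℝ} {γ : ℝ} (hγ : 0 < γ)
    (hsq : ∀ x ∈ C, ∀ y ∈ C, ∀ t ∈ Icc (0 : ℝ) 1,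
      h (x + t • (y - x)) ≤ max (h x) (h y) - γ / 2 * (t * (1 - t) * ‖y - x‖ ^ 2))
    {x y : X} (hx : x ∈ C) (hy : y ∈ C) {b c : ℝ} (hb : 0 < b) (hbc : b ≤ c) (hc : c ≤ 1)
    (hle : h x ≤ h (x + b • (y - x))) : h (x + b • (y - x)) ≤ h (x + c • (y - x)) := by
  have hc0 : 0 < c := hb.trans_le hbc
  have hmem : x + c • (y - x) ∈ C := hC.add_smul_sub_mem hx hy ⟨hc0.le, hc⟩
  have e : x + (b / c) • (x + c • (y - x) - x) = x + b • (y - x) := by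
    rw [add_sub_cancel_left, smul_smul, div_mul_cancel₀ _ hc0.ne']
  have := le_right_of_left_le hγ hsq hx hmem (div_pos hb hc0) ((div_le_one hc0).mpr hbc)
    (by rwa [e])
  rwa [e] at this


/-- If `h` is strongly quasiconvex with modulus `γ > 0` on a convex set `C`,
and `x, y ∈ C`, `z = x + t (y - x)` with `0 < t ≤ 1` satisfy `h x ≤ h z`, then `h` is
nondecreasing along the segment from `z` to `y`: for `0 ≤ s ≤ s' ≤ 1`,
`h (z + s (y - z)) ≤ h (z + s' (y - z))`; in particular `h z ≤ h y`. -/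
theorem stmt3 {X : Type*} [NormedAddCommGroup X] [NormedSpace ℝ X]
    (C : Set X) (hC : Convex ℝ C) (h : X → ℝ) (γ : ℝ) (hγ : 0 < γ)
    (hsq : ∀ x ∈ C, ∀ y ∈ C, ∀ t ∈ Icc (0 : ℝ) 1,
      h (x + t • (y - x)) ≤ max (h x) (h y) - γ / 2 * (t * (1 - t) * ‖y - x‖ ^ 2)) :
    ∀ x ∈ C, ∀ y ∈ C, ∀ t : ℝ, 0 < t → t ≤ 1 →
      ∀ z, z = x + t • (y - x) → h x ≤ h z →
      (∀ s s' : ℝ, 0 ≤ s → s ≤ s' → s' ≤ 1 →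
        h (z + s • (y - z)) ≤ h (z + s' • (y - z))) ∧ h z ≤ h y := by
  intro x hx y hy t ht0 ht1 z hz hxz
  have hmono : ∀ s s' : ℝ, 0 ≤ s → s ≤ s' → s' ≤ 1 →
      h (z + s • (y - z)) ≤ h (z + s' • (y - z)) := by
    intro s s' hs hss hs'
    have e : ∀ r : ℝ, z + r • (y - z) = x + (t + r * (1 - t)) • (y - x) := by
      intro r
      rw [hz]
      module
    have h1 : t ≤ t + s * (1 - t) := by nlinarith
    have h2 : t + s * (1 - t) ≤ t + s' * (1 - t) := by nlinarith
    have h3 : t + s' * (1 - t) ≤ 1 := by nlinarith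
    rw [e, e]
    rw [hz] at hxz
    exact ray_le_of_base_le hC hγ hsq hx hy (ht0.trans_le h1) h2 h3
      (hxz.trans (ray_le_of_base_le hC hγ hsq hx hy ht0 h1 (h2.trans h3) hxz))
  exact ⟨hmono, by simpa using hmono 0 1 le_rfl zero_le_one le_rfl⟩
end

section
/- Let X be a normed space, C ⊆ X an open convex set, γ > 0, and h : C → ℝ a function. If h satisfies the condition: for every x, y ∈ C and every z = x + t(y − x) with 0 < t ≤ 1, h(x) ≤ h(z) implies h(z) ≤ h(y) − (γ/4)(1 − t²)‖y − x‖², then for every x, y ∈ C the implication h(x) ≤ h(y) ⟹ h'₋(y; y − x) ≥ (γ/2)‖y − x‖² holds, where h'₋ denotes the lower Dini directional derivative. (No continuity assumption on h is required for this direction.) -/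
/-!
Prolong the segment from `x` to `y` to `w = y + s (y - x)` with small `s > 0`. Then
`y = x + t (w - x)` for `t = 1 / (1 + s)`, and since `h x ≤ h y`, the hypothesis applied to
`x, w, t` gives `h w - h y ≥ (γ/4) ((1 + s)² - 1) ‖y - x‖² = (γ/4) (2 s + s²) ‖y - x‖²`.
Dividing by `s`, every difference quotient with `s` small is at least `(γ/2) ‖y - x‖²`.
-/

open Set Filter Topology

/-- The lower Dini directional derivative of `h` at `x` in direction `a`:
`liminf_{t → 0⁺} (h (x + t a) - h x) / t`, computed in `EReal`. -/
noncomputable def lowerDini {X : Type*} [NormedAddCommGroup X] [NormedSpace ℝ X]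
    (h : X → ℝ) (x a : X) : EReal :=
  Filter.liminf (fun t : ℝ => (((h (x + t • a) - h x) / t : ℝ) : EReal)) (𝓝[>] (0 : ℝ))

/-- Let `C ⊆ X` be open and convex, `γ > 0`. If for all `x, y ∈ C` and
`z = x + t (y - x)` with `0 < t ≤ 1`, `h x ≤ h z` implies
`h z ≤ h y - (γ/4) (1 - t²) ‖y - x‖²`, then for all `x, y ∈ C`, `h x ≤ h y` implies
`h'₋(y; y - x) ≥ (γ/2) ‖y - x‖²`. No continuity assumption is needed. -/
theorem stmt4 {X : Type*} [NormedAddCommGroup X] [NormedSpace ℝ X]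
    (C : Set X) (hC : Convex ℝ C) (hCo : IsOpen C) (h : X → ℝ) (γ : ℝ) (hγ : 0 < γ)
    (hyp : ∀ x ∈ C, ∀ y ∈ C, ∀ t : ℝ, 0 < t → t ≤ 1 →
      h x ≤ h (x + t • (y - x)) →
      h (x + t • (y - x)) ≤ h y - γ / 4 * ((1 - t ^ 2) * ‖y - x‖ ^ 2)) :
    ∀ x ∈ C, ∀ y ∈ C, h x ≤ h y →
      ((γ / 2 * ‖y - x‖ ^ 2 : ℝ) : EReal) ≤ lowerDini h y (y - x) := by
  intro x hx y hy hxy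
  -- Openness of `C` keeps the extended point `y + s (y - x)` inside `C` for small `s`.
  have hmem : ∀ᶠ s : ℝ in 𝓝[>] (0 : ℝ), y + s • (y - x) ∈ C := by
    have hc : Continuous fun s : ℝ => y + s • (y - x) := by fun_prop
    have h0 : C ∈ 𝓝 (y + (0 : ℝ) • (y - x)) := by
      simpa using hCo.mem_nhds hy
    exact (hc.continuousAt.eventually h0).filter_mono nhdsWithin_le_nhds
  refine le_liminf_of_le (by isBoundedDefault) ?_
  filter_upwards [hmem, self_mem_nhdsWithin] with s hs hs0
  have hpos : 0 < s := hs0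
  have h1s : (1 + s) ≠ 0 := by positivity
  have hsub : y + s • (y - x) - x = (1 + s) • (y - x) := by module
  have hz : x + (1 + s)⁻¹ • (y + s • (y - x) - x) = y := by
    rw [hsub, smul_smul, inv_mul_cancel₀ h1s, one_smul, add_sub_cancel]
  have key := hyp x hx _ hs (1 + s)⁻¹ (by positivity)
    (inv_le_one_of_one_le₀ (by linarith)) (by rw [hz]; exact hxy)
  have hnorm : (1 - ((1 + s)⁻¹) ^ 2) * ‖y + s • (y - x) - x‖ ^ 2
      = (2 * s + s ^ 2) * ‖y - x‖ ^ 2 := by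
    rw [hsub, norm_smul, Real.norm_of_nonneg (by positivity)]
    field_simp
    ring
  rw [hz, hnorm] at key
  rw [EReal.coe_le_coe_iff, le_div_iff₀ hpos]
  have hnn : 0 ≤ γ / 4 * (s ^ 2 * ‖y - x‖ ^ 2) := by positivity
  linarith
end

section
/- Let X be a normed space, C ⊆ X an open convex set, γ > 0, and h : C → ℝ continuous along line segments of C. If for every x, y ∈ C the implication h(x) ≤ h(y) ⟹ h'₋(y; y − x) ≥ (γ/2)‖y − x‖² holds (where h'₋ is the lower Dini directional derivative), then for every x, y ∈ C and every z = x + t(y − x) with 0 < t ≤ 1, h(x) ≤ h(z) implies h(z) ≤ h(y) − (γ/4)(1 − t²)‖y − x‖². -/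
/-! Along the segment put `φ s = h (x + s (y - x))` and `c = γ ‖y - x‖² / 4`. Applying the hypothesis
to the pair `x`, `x + s (y - x)` and dividing by `s` shows that the lower right Dini derivative of `φ`
at `s > 0` is at least `2 c s`, the derivative of `c s²`, as long as `φ 0 ≤ φ s`. For `0 ≤ a < c`
the set of `s ∈ [t, 1]` with `φ t + a (s² - t²) ≤ φ s` is closed, contains `t`, and can be extended
to the right from each of its points: there `φ s ≥ φ t ≥ φ 0`, so `φ` grows faster than `a s²`.
Hence it contains `1`, and letting `a → c` gives the claim. -/

open Set Filter Topology

/-- The continuation argument on `[t, 1]`: the growth condition is only needed at points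
where `φ t ≤ φ s`, because the bound being propagated keeps `φ s` above `φ t`. -/
lemma quadratic_growth_of_local {φ : ℝ → ℝ} {t a : ℝ} (ht : 0 < t) (ht1 : t ≤ 1) (ha : 0 ≤ a)
    (hφ : ContinuousOn φ (Icc t 1))
    (hloc : ∀ s, t ≤ s → s < 1 → φ t ≤ φ s →
      ∀ᶠ σ in 𝓝[>] (0 : ℝ), φ s + a * ((s + σ * s) ^ 2 - s ^ 2) ≤ φ (s + σ * s)) :
    φ t + a * (1 - t ^ 2) ≤ φ 1 := by
  set S : Set ℝ := {s | φ t + a * (s ^ 2 - t ^ 2) ≤ φ s} with hS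
  have hclosed : IsClosed (S ∩ Icc t 1) := by
    have hcl := isClosed_Icc.isClosed_le (f := fun s => φ t + a * (s ^ 2 - t ^ 2)) (g := φ)
      (by fun_prop) hφ
    convert hcl using 1
    ext s
    simp [hS, and_comm]
  have hsub : Icc t 1 ⊆ S := by
    refine hclosed.Icc_subset_of_forall_exists_gt (by simp [hS]) ?_
    rintro s ⟨hs, hts, hs1⟩ u hu
    have hs0 : 0 < s := ht.trans_le hts
    have hsS : φ t + a * (s ^ 2 - t ^ 2) ≤ φ s := hs
    have hge : φ t ≤ φ s := by
      have : 0 ≤ a * (s ^ 2 - t ^ 2) := mul_nonneg ha (by nlinarith)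
      linarith
    have hsu : 0 < (u - s) / s := div_pos (sub_pos.2 hu) hs0
    obtain ⟨σ, hσ, hσ0, hσu⟩ := ((hloc s hts hs1 hge).and (Ioo_mem_nhdsGT hsu)).exists
    have h1 : σ * s < u - s := (lt_div_iff₀ hs0).1 hσu
    have h2 : 0 < σ * s := mul_pos hσ0 hs0
    refine ⟨s + σ * s, ?_, by linarith, by linarith⟩
    change φ t + a * ((s + σ * s) ^ 2 - t ^ 2) ≤ φ (s + σ * s)
    linarith
  simpa [hS] using hsub (right_mem_Icc.2 ht1)

/-- Let `C ⊆ X` be open and convex, `γ > 0`, and `h` continuous along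
line segments of `C`. If for all `x, y ∈ C`, `h x ≤ h y` implies
`h'₋(y; y - x) ≥ (γ/2) ‖y - x‖²`, then for all `x, y ∈ C` and `z = x + t (y - x)` with
`0 < t ≤ 1`, `h x ≤ h z` implies `h z ≤ h y - (γ/4) (1 - t²) ‖y - x‖²`. -/
theorem stmt5 {X : Type*} [NormedAddCommGroup X] [NormedSpace ℝ X]
    (C : Set X) (hC : Convex ℝ C) (hCo : IsOpen C) (h : X → ℝ) (γ : ℝ) (hγ : 0 < γ)
    (hcont : ∀ x ∈ C, ∀ y ∈ C,
      ContinuousOn (fun t : ℝ => h (x + t • (y - x))) (Icc (0 : ℝ) 1))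
    (hyp : ∀ x ∈ C, ∀ y ∈ C, h x ≤ h y →
      ((γ / 2 * ‖y - x‖ ^ 2 : ℝ) : EReal) ≤ lowerDini h y (y - x)) :
    ∀ x ∈ C, ∀ y ∈ C, ∀ t : ℝ, 0 < t → t ≤ 1 →
      h x ≤ h (x + t • (y - x)) →
      h (x + t • (y - x)) ≤ h y - γ / 4 * ((1 - t ^ 2) * ‖y - x‖ ^ 2) := by
  intro x hx y hy t ht ht1 hxz
  obtain rfl | hne := eq_or_ne y x
  · simp
  have hN : 0 < ‖y - x‖ := norm_pos_iff.2 (sub_ne_zero.2 hne)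
  set c : ℝ := γ / 4 * ‖y - x‖ ^ 2 with hc
  have hc0 : 0 < c := by positivity
  set φ : ℝ → ℝ := fun s => h (x + s • (y - x)) with hφ
  have key : ∀ a, 0 ≤ a → a < c → φ t + a * (1 - t ^ 2) ≤ φ 1 := by
    intro a ha hac
    refine quadratic_growth_of_local ht ht1 ha
      ((hcont x hx y hy).mono (Icc_subset_Icc_left ht.le)) ?_
    intro s hts hs1 hge
    have hs0 : 0 < s := ht.trans_le hts
    have hzC : x + s • (y - x) ∈ C := hC.add_smul_sub_mem hx hy ⟨hs0.le, hs1.le⟩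
    have hD := hyp x hx _ hzC (hxz.trans hge)
    rw [add_sub_cancel_left, norm_smul, Real.norm_of_nonneg hs0.le] at hD
    -- `c + a` is the midpoint of `2 a` and `2 c`, which leaves room for the term `a σ²`
    have hlt : ((s ^ 2 * (c + a) : ℝ) : EReal) < lowerDini h (x + s • (y - x)) (s • (y - x)) := by
      refine lt_of_lt_of_le (EReal.coe_lt_coe_iff.2 ?_) hD
      have : 0 < s ^ 2 * (c - a) := mul_pos (by positivity) (sub_pos.2 hac)
      have e : γ / 2 * (s * ‖y - x‖) ^ 2 = s ^ 2 * (2 * c) := by rw [hc]; ring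
      rw [e]
      linarith
    have hsmall : ∀ᶠ σ in 𝓝[>] (0 : ℝ), a * σ < c - a := by
      have : Tendsto (fun σ : ℝ => a * σ) (𝓝[>] 0) (𝓝 (a * 0)) :=
        (Continuous.tendsto (by fun_prop) 0).mono_left nhdsWithin_le_nhds
      exact this.eventually_lt_const (by linarith)
    filter_upwards [eventually_lt_of_lt_liminf hlt, hsmall, self_mem_nhdsWithin]
      with σ h1 h2 h3
    have h3 : 0 < σ := h3
    rw [EReal.coe_lt_coe_iff, lt_div_iff₀ h3] at h1
    have e : x + (s + σ * s) • (y - x) = x + s • (y - x) + σ • s • (y - x) := by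
      rw [add_smul, mul_smul, add_assoc]
    simp only [hφ, e]
    have h4 : 0 < s ^ 2 * σ * (c - a - a * σ) := mul_pos (by positivity) (by linarith)
    nlinarith
  have hlim : φ t + c * (1 - t ^ 2) ≤ φ 1 := by
    have hT : Tendsto (fun a : ℝ => φ t + a * (1 - t ^ 2)) (𝓝[<] c)
        (𝓝 (φ t + c * (1 - t ^ 2))) :=
      (Continuous.tendsto (by fun_prop) c).mono_left nhdsWithin_le_nhds
    refine le_of_tendsto hT ?_
    filter_upwards [Ioo_mem_nhdsLT hc0] with a ha using key a ha.1.le ha.2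
  have h1 : φ 1 = h y := by simp [hφ]
  have e : γ / 4 * ((1 - t ^ 2) * ‖y - x‖ ^ 2) = c * (1 - t ^ 2) := by rw [hc]; ring
  rw [e]
  change φ t ≤ _
  linarith
end

section
/- Let X be a normed space, C ⊆ X an open convex set, and h : C → ℝ strongly quasiconvex with modulus γ > 0. Then for every x, y ∈ C the implication h(x) ≤ h(y) ⟹ h'₋(y; y − x) ≥ (γ/2)‖y − x‖² holds, where h'₋ denotes the lower Dini directional derivative. -/
/-!
For small `t > 0` the point `z = y + t (y - x)` lies in the open set `C`, and
`y = x + (1 + t)⁻¹ (z - x)` with `z - x = (1 + t) (y - x)`. Strong quasiconvexity on the segment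
`[x, z]` therefore reads `h y ≤ max (h x) (h z) - (γ / 2) t ‖y - x‖²`. When `x ≠ y` and
`h x ≤ h y`, the maximum must be `h z`, so the difference quotient at `t` is at least
`(γ / 2) ‖y - x‖²`; the case `x = y` is trivial. The bound passes to the liminf.
-/

open Set Filter Topology

/-- Let `C ⊆ X` be open and convex and `h` strongly quasiconvex with
modulus `γ > 0`. Then for all `x, y ∈ C`, `h x ≤ h y` implies
`h'₋(y; y - x) ≥ (γ/2) ‖y - x‖²`. -/
theorem stmt6 {X : Type*} [NormedAddCommGroup X] [NormedSpace ℝ X]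
    (C : Set X) (hC : Convex ℝ C) (hCo : IsOpen C) (h : X → ℝ) (γ : ℝ) (hγ : 0 < γ)
    (hsq : ∀ x ∈ C, ∀ y ∈ C, ∀ t ∈ Icc (0 : ℝ) 1,
      h (x + t • (y - x)) ≤ max (h x) (h y) - γ / 2 * (t * (1 - t) * ‖y - x‖ ^ 2)) :
    ∀ x ∈ C, ∀ y ∈ C, h x ≤ h y →
      ((γ / 2 * ‖y - x‖ ^ 2 : ℝ) : EReal) ≤ lowerDini h y (y - x) := by
  intro x hx y hy hxy
  unfold lowerDini
  refine le_liminf_of_le (by isBoundedDefault) ?_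
  have hcont : Tendsto (fun t : ℝ => y + t • (y - x)) (𝓝[>] 0) (𝓝 y) := by
    have hc : Continuous (fun t : ℝ => y + t • (y - x)) := by fun_prop
    simpa using (hc.tendsto 0).mono_left nhdsWithin_le_nhds
  filter_upwards [hcont.eventually (hCo.mem_nhds hy), self_mem_nhdsWithin] with t hz ht
  have ht : 0 < t := ht
  rw [EReal.coe_le_coe_iff, le_div_iff₀ ht]
  rcases eq_or_ne x y with rfl | hne
  · simp
  have hpos : 0 < ‖y - x‖ := norm_pos_iff.mpr (sub_ne_zero.mpr hne.symm)
  have ht1 : (1 + t) ≠ 0 := by positivity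
  have hzx : y + t • (y - x) - x = (1 + t) • (y - x) := by module
  have key := hsq x hx _ hz (1 / (1 + t))
    ⟨by positivity, by rw [div_le_one (by positivity)]; linarith⟩
  have hyx : x + (1 / (1 + t)) • ((1 + t) • (y - x)) = y := by
    rw [smul_smul, one_div_mul_cancel ht1, one_smul, add_sub_cancel]
  have hcoef : 1 / (1 + t) * (1 - 1 / (1 + t)) * ((1 + t) * ‖y - x‖) ^ 2
      = t * ‖y - x‖ ^ 2 := by
    field_simp
    ring
  rw [hzx, hyx, norm_smul, Real.norm_of_nonneg (by positivity), hcoef] at key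
  have hgain : 0 < γ / 2 * (t * ‖y - x‖ ^ 2) := by positivity
  -- The maximum cannot be `h x`: that would force `h y < h x`.
  rcases max_choice (h x) (h (y + t • (y - x))) with hm | hm <;> rw [hm] at key <;> linarith
end

section
/- Let X be a normed space, C ⊆ X an open convex set, γ > 0, and h : C → ℝ continuous along line segments of C. If for every x, y ∈ C the implication h(x) ≤ h(y) ⟹ h'₋(y; y − x) ≥ (γ/2)‖y − x‖² holds (where h'₋ is the lower Dini directional derivative), then h is strongly quasiconvex with modulus γ/2. -/
/-!
Restrict `h` to the segment: `φ s = h (x + s (y - x))` and `κ = (γ/2) ‖y - x‖²`. On `[0, 1]` the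
hypothesis becomes `HasGrowth κ φ`, and the claim is that `ψ t = φ t + (κ/2) t (1 - t)` is bounded
by `max (φ 0) (φ 1)`.

Let `t₀` be a maximiser of `ψ` on `[0, 1]`. At an endpoint there is nothing to prove, and the
reflection `t ↦ 1 - t` reduces to `t₀ ≤ 1/2` (`le_of_isMax_half`).
* If `φ s ≤ φ t₀` for some `s > 1/2`, then moving left from `t₀` the function `φ` grows at rate at
  least `κ (s - t₀)`, whereas maximality of `ψ` at `t₀` bounds this rate by `κ (1/2 - t₀)`:
  a contradiction.
* Otherwise `φ t₀ < φ u` for every `u > 1/2`, so the right lower derivative of `φ` at `u` is at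
  least `κ (u - t₀)` (`le_sub_of_growth` integrates this up to `1`), whence
  `φ 1 - φ t₀ ≥ κ ∫_{1/2}^1 (u - t₀) du = (κ/2) (3/4 - t₀) ≥ (κ/2) t₀ (1 - t₀)`.
-/

open Set Filter Topology

/-- The lower Dini condition restricted to a segment parametrised by `[0, 1]`: whenever
`φ s ≤ φ u`, the lower Dini derivative of `φ` at `u` in the direction `u - s` is at least
`κ (u - s)²`. The `liminf` bound is unfolded into eventual inequalities, and `u` is kept interior
so that both directions stay in the segment. -/
def HasGrowth (κ : ℝ) (φ : ℝ → ℝ) : Prop :=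
  ∀ s ∈ Icc (0 : ℝ) 1, ∀ u ∈ Ioo (0 : ℝ) 1, φ s ≤ φ u → ∀ r < κ * (u - s) ^ 2,
    ∀ᶠ t in 𝓝[>] (0 : ℝ), r < (φ (u + t * (u - s)) - φ u) / t

lemma HasGrowth.reflect {κ : ℝ} {φ : ℝ → ℝ} (H : HasGrowth κ φ) :
    HasGrowth κ (fun t => φ (1 - t)) := by
  intro s hs u hu hle r hr
  have h1 := H (1 - s) ⟨by linarith [hs.2], by linarith [hs.1]⟩ (1 - u)
    ⟨by linarith [hu.2], by linarith [hu.1]⟩ hle r (by nlinarith)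
  filter_upwards [h1] with t ht
  have e : 1 - (u + t * (u - s)) = 1 - u + t * (1 - u - (1 - s)) := by ring
  simpa only [e] using ht

/-- Integrated growth: if `φ` stays above `φ a` on `[c, 1)`, then its right lower derivative at
`u` is at least `κ (u - a)`, and the fencing theorem for right derivatives applies to `-φ`. -/
lemma le_sub_of_growth {κ : ℝ} {φ : ℝ → ℝ} (hφ : ContinuousOn φ (Icc 0 1)) (H : HasGrowth κ φ)
    {a c : ℝ} (ha : 0 ≤ a) (hac : a < c) (hc : c < 1)
    (hle : ∀ u ∈ Ico c 1, φ a ≤ φ u) :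
    κ / 2 * ((1 - a) ^ 2 - (c - a) ^ 2) ≤ φ 1 - φ c := by
  have key := image_le_of_liminf_slope_right_le_deriv_boundary
    (f := fun u => -φ u) (a := c) (b := 1)
    (B := fun u => -φ c - κ / 2 * ((u - a) ^ 2 - (c - a) ^ 2))
    (B' := fun u => -(κ * (u - a)))
    ((hφ.mono (Icc_subset_Icc (by linarith) le_rfl)).neg)
    (by simp) (by fun_prop)
    (by
      intro u _
      have hd : HasDerivAt (fun u => -φ c - κ / 2 * ((u - a) ^ 2 - (c - a) ^ 2))
          (-(κ * (u - a))) u := by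
        have h1 := (((((hasDerivAt_id u).sub_const a).pow 2).sub_const
          ((c - a) ^ 2)).const_mul (κ / 2)).const_sub (-φ c)
        have e : -(κ / 2 * (((2 : ℕ) : ℝ) * (id u - a) ^ (2 - 1) * 1)) = -(κ * (u - a)) := by
          simp
          ring
        exact e ▸ h1
      exact hd.hasDerivWithinAt)
    (by
      intro u hu r hr
      have hua : 0 < u - a := by linarith [hu.1]
      have h1 := H a ⟨ha, by linarith⟩ u ⟨by linarith, hu.2⟩ (hle u hu) (-r * (u - a))
        (by nlinarith)
      have hT : Tendsto (fun t : ℝ => u + t * (u - a)) (𝓝[>] 0) (𝓝[>] u) := by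
        refine tendsto_nhdsWithin_iff.2 ⟨?_, ?_⟩
        · have : Tendsto (fun t : ℝ => u + t * (u - a)) (𝓝 0) (𝓝 (u + 0 * (u - a))) :=
            Continuous.tendsto (by fun_prop) 0
          simpa using this.mono_left nhdsWithin_le_nhds
        · filter_upwards [self_mem_nhdsWithin] with t ht
          have : 0 < t * (u - a) := mul_pos ht hua
          simpa using this
      refine hT.frequently (Eventually.frequently ?_)
      filter_upwards [h1, self_mem_nhdsWithin] with t ht htp
      have htp' : 0 < t := htp
      rw [lt_div_iff₀ htp'] at ht
      rw [slope_def_field, div_lt_iff₀ (by simpa using mul_pos htp' hua)]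
      nlinarith)
  have := key (right_mem_Icc.2 hc.le)
  linarith

lemma le_of_isMax_half {κ : ℝ} (hκ : 0 < κ) {φ : ℝ → ℝ} (hφ : ContinuousOn φ (Icc 0 1))
    (H : HasGrowth κ φ) {a : ℝ} (ha : 0 < a) (ha2 : a ≤ 1 / 2)
    (hmax : ∀ t ∈ Icc (0 : ℝ) 1, φ t + κ / 2 * (t * (1 - t)) ≤ φ a + κ / 2 * (a * (1 - a))) :
    φ a + κ / 2 * (a * (1 - a)) ≤ φ 1 := by
  by_cases hs : ∃ s, 1 / 2 < s ∧ s ≤ 1 ∧ φ s ≤ φ a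
  · exfalso
    obtain ⟨s, hs1, hs2, hle⟩ := hs
    have hd : 0 < s - a := by linarith
    have hlt : κ / 2 * (s - a) * (1 - 2 * a) < κ * (a - s) ^ 2 := by
      have : 0 < κ * (s - a) * (s - 1 / 2) := by
        have : 0 < s - 1 / 2 := by linarith
        positivity
      nlinarith
    obtain ⟨r, hr1, hr2⟩ := exists_between hlt
    have h1 := H s ⟨by linarith, hs2⟩ a ⟨ha, by linarith⟩ hle r hr2
    have hT1 : Tendsto (fun t : ℝ => a + t * (a - s)) (𝓝[>] 0) (𝓝 a) := by
      have : Tendsto (fun t : ℝ => a + t * (a - s)) (𝓝 0) (𝓝 (a + 0 * (a - s))) :=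
        Continuous.tendsto (by fun_prop) 0
      simpa using this.mono_left nhdsWithin_le_nhds
    -- Maximality bounds the difference quotient by this affine function of `t`.
    have hT2 : Tendsto (fun t : ℝ => κ / 2 * (s - a) * (1 - 2 * a) + κ / 2 * t * (s - a) ^ 2)
        (𝓝[>] 0) (𝓝 (κ / 2 * (s - a) * (1 - 2 * a))) := by
      have : Tendsto (fun t : ℝ => κ / 2 * (s - a) * (1 - 2 * a) + κ / 2 * t * (s - a) ^ 2)
        (𝓝 0) (𝓝 (κ / 2 * (s - a) * (1 - 2 * a) + κ / 2 * 0 * (s - a) ^ 2)) :=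
        Continuous.tendsto (by fun_prop) 0
      simpa using this.mono_left nhdsWithin_le_nhds
    have hE := hT1.eventually (Icc_mem_nhds ha (by linarith : a < 1))
    obtain ⟨t, ht1, ht2, ht3, ht0⟩ := (h1.and (hE.and ((hT2.eventually_lt_const hr1).and
      self_mem_nhdsWithin))).exists
    have ht0' : 0 < t := ht0
    rw [lt_div_iff₀ ht0'] at ht1
    have := hmax _ ht2
    have h3 := mul_lt_mul_of_pos_right ht3 ht0'
    nlinarith
  · push Not at hs
    -- `c = 1/2` is reached as a limit: for `a = 1/2` the growth condition is void at `u = c`.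
    have hc : ∀ c ∈ Ioo (1 / 2 : ℝ) 1, κ / 2 * ((1 - a) ^ 2 - (c - a) ^ 2) ≤ φ 1 - φ a := by
      intro c hc
      have h1 := le_sub_of_growth hφ H ha.le (lt_of_le_of_lt ha2 hc.1) hc.2
        (fun u hu => (hs u (lt_of_lt_of_le hc.1 hu.1) hu.2.le).le)
      linarith [hs c hc.1 hc.2.le]
    have hT : Tendsto (fun c : ℝ => κ / 2 * ((1 - a) ^ 2 - (c - a) ^ 2)) (𝓝[>] (1 / 2))
        (𝓝 (κ / 2 * ((1 - a) ^ 2 - (1 / 2 - a) ^ 2))) :=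
      (Continuous.tendsto (by fun_prop) (1 / 2 : ℝ)).mono_left nhdsWithin_le_nhds
    have hl := le_of_tendsto hT (by
      filter_upwards [Ioo_mem_nhdsGT (by norm_num : (1 / 2 : ℝ) < 1)] with c h using hc c h)
    have : 0 ≤ κ / 2 * ((1 / 2 - a) * (3 / 2 - a)) := by
      have h1 : 0 ≤ 1 / 2 - a := by linarith
      have h2 : 0 ≤ 3 / 2 - a := by linarith
      positivity
    nlinarith

lemma HasGrowth.le_max {κ : ℝ} (hκ : 0 < κ) {φ : ℝ → ℝ} (hφ : ContinuousOn φ (Icc 0 1))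
    (H : HasGrowth κ φ) {t : ℝ} (ht : t ∈ Icc (0 : ℝ) 1) :
    φ t + κ / 2 * (t * (1 - t)) ≤ max (φ 0) (φ 1) := by
  obtain ⟨a, ha, hmax⟩ := isCompact_Icc.exists_isMaxOn (nonempty_Icc.2 zero_le_one)
    (f := fun t => φ t + κ / 2 * (t * (1 - t))) (hφ.add (by fun_prop))
  have hmax' : ∀ t ∈ Icc (0 : ℝ) 1,
      φ t + κ / 2 * (t * (1 - t)) ≤ φ a + κ / 2 * (a * (1 - a)) := fun t ht => hmax ht
  refine (hmax' t ht).trans ?_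
  rcases eq_or_lt_of_le ha.1 with h0 | h0
  · subst h0
    simp
  rcases eq_or_lt_of_le ha.2 with h1 | h1
  · subst h1
    simp
  rcases le_total a (1 / 2) with h2 | h2
  · exact (le_of_isMax_half hκ hφ H h0 h2 hmax').trans (le_max_right _ _)
  · have hφ' : ContinuousOn (fun t => φ (1 - t)) (Icc 0 1) :=
      hφ.comp (by fun_prop) (fun t ht => ⟨by linarith [ht.2], by linarith [ht.1]⟩)
    have h3 := le_of_isMax_half hκ hφ' H.reflect (a := 1 - a) (by linarith) (by linarith)
      (fun t ht => by
        have := hmax' (1 - t) ⟨by linarith [ht.2], by linarith [ht.1]⟩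
        simp only [sub_sub_cancel] at this ⊢
        linarith)
    simp only [sub_sub_cancel, sub_self] at h3
    exact le_trans (by linarith) (le_max_left _ _)

/-- Let `C ⊆ X` be open and convex, `γ > 0`, and `h` continuous along
line segments of `C`. If for all `x, y ∈ C`, `h x ≤ h y` implies
`h'₋(y; y - x) ≥ (γ/2) ‖y - x‖²`, then `h` is strongly quasiconvex with modulus `γ/2`. -/
theorem stmt7 {X : Type*} [NormedAddCommGroup X] [NormedSpace ℝ X]
    (C : Set X) (hC : Convex ℝ C) (hCo : IsOpen C) (h : X → ℝ) (γ : ℝ) (hγ : 0 < γ)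
    (hcont : ∀ x ∈ C, ∀ y ∈ C,
      ContinuousOn (fun t : ℝ => h (x + t • (y - x))) (Icc (0 : ℝ) 1))
    (hyp : ∀ x ∈ C, ∀ y ∈ C, h x ≤ h y →
      ((γ / 2 * ‖y - x‖ ^ 2 : ℝ) : EReal) ≤ lowerDini h y (y - x)) :
    ∀ x ∈ C, ∀ y ∈ C, ∀ t ∈ Icc (0 : ℝ) 1,
      h (x + t • (y - x)) ≤ max (h x) (h y) - γ / 2 / 2 * (t * (1 - t) * ‖y - x‖ ^ 2) := by
  intro x hx y hy t ht
  rcases eq_or_ne x y with rfl | hxy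
  · simp
  have hpos : 0 < ‖y - x‖ := norm_pos_iff.2 (sub_ne_zero.2 hxy.symm)
  have hmem : ∀ s ∈ Icc (0 : ℝ) 1, x + s • (y - x) ∈ C := fun s hs =>
    hC.add_smul_sub_mem hx hy hs
  have H : HasGrowth (γ / 2 * ‖y - x‖ ^ 2) (fun s => h (x + s • (y - x))) := by
    intro s hs u hu hle r hr
    have h1 := hyp _ (hmem s hs) _ (hmem u ⟨hu.1.le, hu.2.le⟩) hle
    have e : x + u • (y - x) - (x + s • (y - x)) = (u - s) • (y - x) := by
      rw [sub_smul]; abel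
    rw [e, norm_smul, mul_pow, Real.norm_eq_abs, sq_abs] at h1
    have h2 : (r : EReal) < lowerDini h (x + u • (y - x)) ((u - s) • (y - x)) :=
      lt_of_lt_of_le (EReal.coe_lt_coe_iff.2 (by linarith)) h1
    filter_upwards [eventually_lt_of_lt_liminf h2] with τ hτ
    have e2 : x + (u + τ * (u - s)) • (y - x)
        = x + u • (y - x) + τ • (u - s) • (y - x) := by
      rw [add_smul, mul_smul, add_assoc]
    simp only [e2]
    exact EReal.coe_lt_coe_iff.1 hτ
  have h1 := H.le_max (by positivity) (hcont x hx y hy) ht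
  simp only [zero_smul, add_zero, one_smul, add_sub_cancel] at h1
  linarith
end

section
/- Let X be a normed space, C ⊆ X an open convex set, γ > 0, and h : C → ℝ continuous along line segments of C. If for every x, y ∈ C the implication h(x) ≤ h(y) ⟹ h'₋(y; y − x) ≥ (γ/2)‖y − x‖² holds (where h'₋ is the lower Dini directional derivative), then h is strictly quasiconvex: for all x, y ∈ C with x ≠ y and all t ∈ (0,1), h(x + t(y − x)) < max{h(x), h(y)}. -/
/-!
If strict quasiconvexity fails on a segment from `x` to `y`, the continuous restriction of `h` to
that segment attains its maximum at an interior point `z`. Since `h x ≤ h z` and `z ≠ x`, the lower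
Dini derivative of `h` at `z` in the direction `z - x` is positive, so `h` takes values above `h z`
just beyond `z` towards `y`, contradicting maximality.
-/

open Set Filter Topology

lemma eventually_lt_of_lowerDini_pos {X : Type*} [NormedAddCommGroup X] [NormedSpace ℝ X]
    {h : X → ℝ} {x a : X} (hpos : 0 < lowerDini h x a) :
    ∀ᶠ t in 𝓝[>] (0 : ℝ), h x < h (x + t • a) := by
  filter_upwards [eventually_lt_of_lt_liminf hpos, self_mem_nhdsWithin] with t ht ht0
  have h1 : 0 < (h (x + t • a) - h x) / t := by exact_mod_cast ht
  have ht0' : 0 < t := ht0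
  have h2 := (div_pos_iff_of_pos_right ht0').1 h1
  linarith

/-- Let `C ⊆ X` be open and convex, `γ > 0`, and `h` continuous along
line segments of `C`. If for all `x, y ∈ C`, `h x ≤ h y` implies
`h'₋(y; y - x) ≥ (γ/2) ‖y - x‖²`, then `h` is strictly quasiconvex: for all
`x ≠ y` in `C` and `t ∈ (0,1)`, `h (x + t (y - x)) < max (h x) (h y)`. -/
theorem stmt8 {X : Type*} [NormedAddCommGroup X] [NormedSpace ℝ X]
    (C : Set X) (hC : Convex ℝ C) (hCo : IsOpen C) (h : X → ℝ) (γ : ℝ) (hγ : 0 < γ)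
    (hcont : ∀ x ∈ C, ∀ y ∈ C,
      ContinuousOn (fun t : ℝ => h (x + t • (y - x))) (Icc (0 : ℝ) 1))
    (hyp : ∀ x ∈ C, ∀ y ∈ C, h x ≤ h y →
      ((γ / 2 * ‖y - x‖ ^ 2 : ℝ) : EReal) ≤ lowerDini h y (y - x)) :
    ∀ x ∈ C, ∀ y ∈ C, x ≠ y → ∀ t : ℝ, 0 < t → t < 1 →
      h (x + t • (y - x)) < max (h x) (h y) := by
  intro x hx y hy hxy t ht0 ht1
  by_contra! hle
  obtain ⟨hxt, hyt⟩ := max_le_iff.1 hle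
  have hmax : ∃ s ∈ Ioo (0 : ℝ) 1, ∀ r ∈ Icc (0 : ℝ) 1,
      h (x + r • (y - x)) ≤ h (x + s • (y - x)) := by
    obtain ⟨s, hs, hsmax⟩ :=
      isCompact_Icc.exists_isMaxOn (nonempty_Icc.2 zero_le_one) (hcont x hx y hy)
    have hsmax' : ∀ r ∈ Icc (0 : ℝ) 1, h (x + r • (y - x)) ≤ h (x + s • (y - x)) :=
      fun r hr => hsmax hr
    -- A maximizer at an endpoint can be replaced by `t`, where `h` is at least as large.
    rcases eq_or_lt_of_le hs.1 with h0 | h0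
    · refine ⟨t, ⟨ht0, ht1⟩, fun r hr => (hsmax' r hr).trans ?_⟩
      simpa [← h0] using hxt
    rcases eq_or_lt_of_le hs.2 with h1 | h1
    · refine ⟨t, ⟨ht0, ht1⟩, fun r hr => (hsmax' r hr).trans ?_⟩
      simpa [h1] using hyt
    · exact ⟨s, ⟨h0, h1⟩, hsmax'⟩
  obtain ⟨s, ⟨hs0, hs1⟩, hsmax⟩ := hmax
  have hz : x + s • (y - x) ∈ C := hC.add_smul_sub_mem hx hy ⟨hs0.le, hs1.le⟩
  have hxz : h x ≤ h (x + s • (y - x)) := by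
    simpa using hsmax 0 ⟨le_rfl, zero_le_one⟩
  have hD := hyp x hx _ hz hxz
  rw [add_sub_cancel_left] at hD
  have hnorm : 0 < ‖s • (y - x)‖ :=
    norm_pos_iff.2 (smul_ne_zero hs0.ne' (sub_ne_zero.2 hxy.symm))
  have hc : 0 < γ / 2 * ‖s • (y - x)‖ ^ 2 := by positivity
  have hpos : 0 < lowerDini h (x + s • (y - x)) (s • (y - x)) :=
    lt_of_lt_of_le (by exact_mod_cast hc) hD
  -- For `τ < 1 - s` the point `z + τ • (z - x)` has parameter `s + τ * s ≤ 1` on the segment.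
  obtain ⟨τ, hτ, hτ0, hτ1⟩ := ((eventually_lt_of_lowerDini_pos hpos).and
    (Ioo_mem_nhdsGT (sub_pos.2 hs1))).exists
  have hr := hsmax (s + τ * s) ⟨by positivity, by nlinarith⟩
  rw [add_smul, mul_smul, ← add_assoc] at hr
  exact absurd hτ (not_lt.2 hr)
end

section
/- Let X be a normed space, C ⊆ X an open convex set, and h : C → ℝ Gâteaux differentiable on C with gradient ∇h. If h is strongly quasiconvex with modulus γ > 0, then for every x, y ∈ C, h(x) ≤ h(y) implies ⟨∇h(y), y − x⟩ ≥ (γ/2)‖y − x‖². -/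
/-!
The derivative at `y` in the direction `y - x` is computed from the left, along the segment from
`x` to `y`. For `-1 < t < 0` the point `y + t (y - x)` equals `x + (1 + t) (y - x)`, so strong
quasiconvexity with `h x ≤ h y` gives `h (y + t (y - x)) - h y ≤ γ / 2 * (1 + t) * t * ‖y - x‖ ^ 2`.
Dividing by `t < 0` bounds the difference quotient below by `γ / 2 * (1 + t) * ‖y - x‖ ^ 2`, and
`t → 0⁻` gives the claim.
-/

open Set Filter Topology

/-- Let `C ⊆ X` be open and convex and `h : C → ℝ` Gâteaux
differentiable on `C`, with `Dh y a = ⟨∇h(y), a⟩ = lim_{t→0} (h (y + t a) - h y)/t`.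
If `h` is strongly quasiconvex with modulus `γ > 0`, then for all `x, y ∈ C`,
`h x ≤ h y` implies `⟨∇h(y), y - x⟩ ≥ (γ/2) ‖y - x‖²`. -/
theorem stmt9 {X : Type*} [NormedAddCommGroup X] [NormedSpace ℝ X]
    (C : Set X) (hC : Convex ℝ C) (hCo : IsOpen C) (h : X → ℝ)
    (Dh : X → X → ℝ)
    (hgat : ∀ y ∈ C, ∀ a : X,
      Filter.Tendsto (fun t : ℝ => (h (y + t • a) - h y) / t) (𝓝[≠] (0 : ℝ))
        (𝓝 (Dh y a)))
    (γ : ℝ) (hγ : 0 < γ)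
    (hsq : ∀ x ∈ C, ∀ y ∈ C, ∀ t ∈ Icc (0 : ℝ) 1,
      h (x + t • (y - x)) ≤ max (h x) (h y) - γ / 2 * (t * (1 - t) * ‖y - x‖ ^ 2)) :
    ∀ x ∈ C, ∀ y ∈ C, h x ≤ h y → γ / 2 * ‖y - x‖ ^ 2 ≤ Dh y (y - x) := by
  intro x hx y hy hxy
  have hlim : Tendsto (fun t : ℝ => (h (y + t • (y - x)) - h y) / t) (𝓝[<] (0 : ℝ))
      (𝓝 (Dh y (y - x))) :=
    (hgat y hy (y - x)).mono_left (nhdsWithin_mono _ fun t ht => ne_of_lt ht)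
  have hlow : Tendsto (fun t : ℝ => γ / 2 * ((1 + t) * ‖y - x‖ ^ 2)) (𝓝[<] (0 : ℝ))
      (𝓝 (γ / 2 * ‖y - x‖ ^ 2)) := by
    have hc : Continuous fun t : ℝ => γ / 2 * ((1 + t) * ‖y - x‖ ^ 2) := by fun_prop
    simpa using (hc.tendsto 0).mono_left nhdsWithin_le_nhds
  refine le_of_tendsto_of_tendsto hlow hlim ?_
  filter_upwards [Ioo_mem_nhdsLT (show (-1 : ℝ) < 0 by norm_num)] with t ht
  have hq := hsq x hx y hy (1 + t) ⟨by linarith [ht.1], by linarith [ht.2]⟩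
  have hpt : x + (1 + t) • (y - x) = y + t • (y - x) := by module
  rw [hpt, max_eq_right hxy] at hq
  rw [le_div_iff_of_neg ht.2]
  linarith
end

section
/- Let X be a normed space, C ⊆ X an open convex set, γ > 0, and h : C → ℝ Gâteaux differentiable on C with gradient ∇h. If for every x, y ∈ C the implication h(x) ≤ h(y) ⟹ ⟨∇h(y), y − x⟩ ≥ (γ/2)‖y − x‖² holds, then h is strongly quasiconvex with modulus γ/2. -/
/-!
Restricting `h` to the segment from `x` to `y` gives `φ : ℝ → ℝ` such that
`φ s ≤ φ t` implies `c (t - s)² ≤ φ' t (t - s)`, with `c = γ/2 ‖y - x‖²`. Such a `φ` is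
quasiconvex, since `φ'` would have both signs at a point exceeding both ends of a subinterval.
By reflection let `t ≥ 1/2`. If `φ (1/2) ≤ φ` on `[t, 1]`, then `φ' s ≥ c (s - 1/2)`
there, and integrating gives `φ 1 - φ t ≥ c/2 t (1 - t)`. Otherwise quasiconvexity shows
`φ ≥ φ (1/2) ≥ φ t` on `[0, 1/2]`, so `-φ' s ≥ c (t - s)` there, and integrating gives
`φ 0 - φ t ≥ c/2 (t - 1/4) ≥ c/2 t (1 - t)`.
-/

open Set Filter Topology

section Line

variable {φ φ' : ℝ → ℝ} {c : ℝ}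

lemma line_quasiconvex (hc : 0 < c)
    (hφ : ∀ s ∈ Icc (0 : ℝ) 1, ∀ t ∈ Icc (0 : ℝ) 1, φ s ≤ φ t →
      c * (t - s) ^ 2 ≤ φ' t * (t - s))
    {a b d : ℝ} (ha : 0 ≤ a) (hab : a ≤ b) (hbd : b ≤ d) (hd : d ≤ 1) :
    φ b ≤ max (φ a) (φ d) := by
  by_contra! hlt
  obtain ⟨h1, h2⟩ := max_lt_iff.1 hlt
  have hab' : a < b := lt_of_le_of_ne hab (by rintro rfl; exact lt_irrefl _ h1)
  have hbd' : b < d := lt_of_le_of_ne hbd (by rintro rfl; exact lt_irrefl _ h2)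
  have k1 := hφ a ⟨ha, by linarith⟩ b ⟨by linarith, by linarith⟩ h1.le
  have k2 := hφ d ⟨by linarith, hd⟩ b ⟨by linarith, by linarith⟩ h2.le
  have p1 : 0 < φ' b := by
    have : 0 < c * (b - a) ^ 2 := mul_pos hc (pow_pos (sub_pos.2 hab') 2)
    exact pos_of_mul_pos_left (this.trans_le k1) (sub_pos.2 hab').le
  have p2 : 0 ≤ c * (b - d) ^ 2 := by positivity
  nlinarith [mul_pos p1 (sub_pos.2 hbd')]

/-- Integrated form of the pointwise bound `c (s - p) ≤ φ' s`. -/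
lemma line_integrate {a b p : ℝ} (hab : a ≤ b)
    (hd : ∀ s ∈ Icc a b, HasDerivAt φ (φ' s) s)
    (hle : ∀ s ∈ Ioo a b, c * (s - p) ≤ φ' s) :
    c / 2 * ((b - p) ^ 2 - (a - p) ^ 2) ≤ φ b - φ a := by
  have hg : ∀ s ∈ Icc a b,
      HasDerivAt (fun s => φ s - c / 2 * (s - p) ^ 2) (φ' s - c * (s - p)) s := by
    intro s hs
    refine ((hd s hs).sub ((((hasDerivAt_id s).sub_const p).pow 2).const_mul (c / 2))).congr_deriv ?_
    simp
    ring
  have hm : MonotoneOn (fun s => φ s - c / 2 * (s - p) ^ 2) (Icc a b) := by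
    refine monotoneOn_of_deriv_nonneg (convex_Icc a b)
      (fun s hs => (hg s hs).continuousAt.continuousWithinAt) ?_ ?_
    · intro s hs
      exact (hg s (interior_subset hs)).differentiableAt.differentiableWithinAt
    · intro s hs
      rw [(hg s (interior_subset hs)).deriv]
      rw [interior_Icc] at hs
      linarith [hle s hs]
  have := hm (left_mem_Icc.2 hab) (right_mem_Icc.2 hab) hab
  simp only at this
  linarith

lemma line_right_half (hc : 0 < c)
    (hd : ∀ s ∈ Icc (0 : ℝ) 1, HasDerivAt φ (φ' s) s)
    (hφ : ∀ s ∈ Icc (0 : ℝ) 1, ∀ t ∈ Icc (0 : ℝ) 1, φ s ≤ φ t →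
      c * (t - s) ^ 2 ≤ φ' t * (t - s))
    {t : ℝ} (ht : 1 / 2 ≤ t) (ht1 : t ≤ 1) :
    φ t ≤ max (φ 0) (φ 1) - c / 2 * (t * (1 - t)) := by
  by_cases hA : ∀ s ∈ Icc t 1, φ (1 / 2) ≤ φ s
  · have := line_integrate (φ := φ) (φ' := φ') (c := c) (p := 1 / 2) ht1
      (fun s hs => hd s ⟨by linarith [hs.1], hs.2⟩) (by
        intro s hs
        have hpos : 0 < s - 1 / 2 := by linarith [hs.1]
        have := hφ (1 / 2) (by norm_num) s ⟨by linarith, hs.2.le⟩ (hA s ⟨hs.1.le, hs.2.le⟩)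
        refine le_of_mul_le_mul_right ?_ hpos
        linarith)
    have := le_max_right (φ 0) (φ 1)
    linarith
  · push Not at hA
    obtain ⟨s, hs, hlt⟩ := hA
    have h1 : φ t ≤ φ (1 / 2) := by
      have := line_quasiconvex hc hφ (by norm_num) ht hs.1 hs.2
      rwa [max_eq_left hlt.le] at this
    have h2 : ∀ r ∈ Icc (0 : ℝ) (1 / 2), φ (1 / 2) ≤ φ r := by
      intro r hr
      have := line_quasiconvex hc hφ hr.1 hr.2 (ht.trans hs.1) hs.2
      exact (le_max_iff.1 this).resolve_right hlt.not_ge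
    -- The bound `-φ' r ≥ c (t - r)` is integrated through `-φ`, with `-c` in place of `c`.
    have h3 := line_integrate (φ := fun r => -φ r) (φ' := fun r => -φ' r) (c := -c) (p := t)
      (a := 0) (b := 1 / 2) (by norm_num)
      (fun r hr => (hd r ⟨hr.1, by linarith [hr.2]⟩).neg) (by
        intro r hr
        have hpos : 0 < t - r := by linarith [hr.2]
        have := hφ t ⟨by linarith, ht1⟩ r ⟨hr.1.le, by linarith [hr.2]⟩
          (h1.trans (h2 r ⟨hr.1.le, hr.2.le⟩))
        refine le_of_mul_le_mul_right ?_ hpos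
        linarith)
    have := le_max_left (φ 0) (φ 1)
    nlinarith [mul_nonneg hc.le (sq_nonneg (t - 1 / 2))]

end Line

/-- Let `C ⊆ X` be open and convex, `γ > 0`, and `h : C → ℝ` Gâteaux
differentiable on `C`, with `Dh y a = ⟨∇h(y), a⟩ = lim_{t→0} (h (y + t a) - h y)/t`.
If for all `x, y ∈ C`, `h x ≤ h y` implies `⟨∇h(y), y - x⟩ ≥ (γ/2) ‖y - x‖²`, then `h`
is strongly quasiconvex with modulus `γ/2`. -/
theorem stmt10 {X : Type*} [NormedAddCommGroup X] [NormedSpace ℝ X]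
    (C : Set X) (hC : Convex ℝ C) (hCo : IsOpen C) (h : X → ℝ)
    (Dh : X → X → ℝ)
    (hgat : ∀ y ∈ C, ∀ a : X,
      Filter.Tendsto (fun t : ℝ => (h (y + t • a) - h y) / t) (𝓝[≠] (0 : ℝ))
        (𝓝 (Dh y a)))
    (γ : ℝ) (hγ : 0 < γ)
    (hyp : ∀ x ∈ C, ∀ y ∈ C, h x ≤ h y → γ / 2 * ‖y - x‖ ^ 2 ≤ Dh y (y - x)) :
    ∀ x ∈ C, ∀ y ∈ C, ∀ t ∈ Icc (0 : ℝ) 1,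
      h (x + t • (y - x)) ≤ max (h x) (h y) - γ / 2 / 2 * (t * (1 - t) * ‖y - x‖ ^ 2) := by
  have hder : ∀ z ∈ C, ∀ a : X, HasDerivAt (fun u : ℝ => h (z + u • a)) (Dh z a) 0 := by
    intro z hz a
    rw [hasDerivAt_iff_tendsto_slope_zero]
    simpa [div_eq_inv_mul] using hgat z hz a
  have hhom : ∀ z ∈ C, ∀ (a : X) (r : ℝ), Dh z (r • a) = Dh z a * r := by
    intro z hz a r
    have h1 : HasDerivAt (fun u : ℝ => h (z + (u * r) • a)) (Dh z a * r) 0 := by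
      have h2 : HasDerivAt (fun u : ℝ => u * r) r 0 := by
        simpa using (hasDerivAt_id (0 : ℝ)).mul_const r
      have h3 : HasDerivAt (fun u : ℝ => h (z + u • a)) (Dh z a) ((0 : ℝ) * r) := by
        simpa using hder z hz a
      exact h3.comp (0 : ℝ) h2
    refine (hder z hz (r • a)).unique ?_
    simpa only [smul_smul] using h1
  -- It suffices to treat the half of each segment nearer its second end point.
  have key : ∀ x ∈ C, ∀ y ∈ C, ∀ t : ℝ, 1 / 2 ≤ t → t ≤ 1 →
      h (x + t • (y - x)) ≤ max (h x) (h y) - γ / 2 / 2 * (t * (1 - t) * ‖y - x‖ ^ 2) := by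
    intro x hx y hy t ht ht1
    rcases eq_or_ne y x with rfl | hne
    · simp
    have hn : 0 < ‖y - x‖ := norm_pos_iff.2 (sub_ne_zero.2 hne)
    have hmem : ∀ s ∈ Icc (0 : ℝ) 1, x + s • (y - x) ∈ C :=
      fun s hs => hC.add_smul_sub_mem hx hy hs
    have hmain := line_right_half (φ := fun s => h (x + s • (y - x)))
      (φ' := fun s => Dh (x + s • (y - x)) (y - x)) (c := γ / 2 * ‖y - x‖ ^ 2)
      (by positivity)
      (by
        intro s hs
        have h1 : HasDerivAt (fun u : ℝ => h (x + s • (y - x) + u • (y - x)))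
            (Dh (x + s • (y - x)) (y - x)) (s - s) := by
          simpa using hder _ (hmem s hs) (y - x)
        have h2 := h1.comp_sub_const s s
        refine h2.congr_of_eventuallyEq (Eventually.of_forall fun u => ?_)
        change h _ = h _
        congr 1
        module)
      (by
        intro s hs r hr hle
        have h1 := hyp _ (hmem s hs) _ (hmem r hr) hle
        have h2 : x + r • (y - x) - (x + s • (y - x)) = (r - s) • (y - x) := by module
        rw [h2, hhom _ (hmem r hr), norm_smul, mul_pow, Real.norm_eq_abs, sq_abs] at h1
        linarith)
      ht ht1
    simp only [zero_smul, add_zero, one_smul, add_sub_cancel] at hmain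
    linarith
  intro x hx y hy t ht
  rcases le_total (1 / 2) t with h1 | h1
  · exact key x hx y hy t h1 ht.2
  · have h2 := key y hy x hx (1 - t) (by linarith) (by linarith [ht.1])
    have h3 : y + (1 - t) • (x - y) = x + t • (y - x) := by module
    rw [h3, max_comm, norm_sub_rev] at h2
    linarith
end

section
/- Let X be a normed space, C ⊆ X a convex set, and h : C → ℝ strongly quasiconvex with modulus γ > 0. If x̄ ∈ C is a minimizer of h on C (i.e., h(x̄) ≤ h(y) for all y ∈ C), then h(x̄) + (γ/4)‖y − x̄‖² ≤ h(y) for every y ∈ C. -/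
open Set

/-!
Put `g s = h (x̄ + s (y - x̄))` and `D = ‖y - x̄‖`. Applying strong quasiconvexity to the pair
`x̄`, `x̄ + u (y - x̄)`, where minimality of `x̄` resolves the maximum, gives
`g u - g s ≥ (γ/2) s (u - s) D²` for `0 ≤ s ≤ u ≤ 1` (`radial_increment`). A single use of this
bound only yields the constant `γ/8`. Summing it over the uniform grid `s = k/n` produces the
Riemann sum of `(γ/2) D² ∫₀¹ s ds = (γ/4) D²`, namely `(γ/4) D² (1 - 1/n)` (`grid_bound`), and
the result follows by letting `n → ∞`.
-/

lemma radial_increment {X : Type*} [NormedAddCommGroup X] [NormedSpace ℝ X]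
    {C : Set X} (hC : Convex ℝ C) {h : X → ℝ} {γ : ℝ}
    (hsq : ∀ x ∈ C, ∀ y ∈ C, ∀ t ∈ Icc (0 : ℝ) 1,
      h (x + t • (y - x)) ≤ max (h x) (h y) - γ / 2 * (t * (1 - t) * ‖y - x‖ ^ 2))
    {x : X} (hx : x ∈ C) (hmin : ∀ y ∈ C, h x ≤ h y) {y : X} (hy : y ∈ C)
    {s u : ℝ} (hs : 0 ≤ s) (hsu : s ≤ u) (hu : 0 < u) (hu1 : u ≤ 1) :
    h (x + s • (y - x)) + γ / 2 * (s * (u - s)) * ‖y - x‖ ^ 2 ≤ h (x + u • (y - x)) := by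
  have hp : x + u • (y - x) ∈ C := hC.add_smul_sub_mem hx hy ⟨hu.le, hu1⟩
  have key := hsq x hx _ hp (s / u) ⟨by positivity, (div_le_one hu).2 hsu⟩
  rw [max_eq_right (hmin _ hp), add_sub_cancel_left, smul_smul, div_mul_cancel₀ _ hu.ne',
    norm_smul, Real.norm_of_nonneg hu.le] at key
  have e : s / u * (1 - s / u) * (u * ‖y - x‖) ^ 2 = s * (u - s) * ‖y - x‖ ^ 2 := by
    field_simp
  rw [e] at key
  linarith

/-- The increments over the grid of mesh `1 / n` add up, since `∑ i < k, i = k (k - 1) / 2`. -/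
lemma grid_bound {X : Type*} [NormedAddCommGroup X] [NormedSpace ℝ X]
    {C : Set X} (hC : Convex ℝ C) {h : X → ℝ} {γ : ℝ}
    (hsq : ∀ x ∈ C, ∀ y ∈ C, ∀ t ∈ Icc (0 : ℝ) 1,
      h (x + t • (y - x)) ≤ max (h x) (h y) - γ / 2 * (t * (1 - t) * ‖y - x‖ ^ 2))
    {x : X} (hx : x ∈ C) (hmin : ∀ y ∈ C, h x ≤ h y) {y : X} (hy : y ∈ C)
    {n : ℕ} (hn : 0 < n) (k : ℕ) (hk : k ≤ n) :
    h x + γ / 4 * ((k : ℝ) * (k - 1) / (n : ℝ) ^ 2) * ‖y - x‖ ^ 2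
      ≤ h (x + ((k : ℝ) / n) • (y - x)) := by
  have hn' : (0 : ℝ) < n := by exact_mod_cast hn
  induction k with
  | zero => simp
  | succ k ih =>
    have hk' : ((k + 1 : ℕ) : ℝ) ≤ n := by exact_mod_cast hk
    have step := radial_increment hC hsq hx hmin hy (s := (k : ℝ) / n)
      (u := ((k + 1 : ℕ) : ℝ) / n) (by positivity) (by gcongr; simp) (by positivity)
      ((div_le_one hn').2 hk')
    refine le_trans (le_of_eq ?_) ((add_le_add_left (ih (by omega)) _).trans step)
    push_cast
    field_simp
    ring

/-- If `h` is strongly quasiconvex with modulus `γ > 0` on a convex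
set `C` and `x̄ ∈ C` is a minimizer of `h` on `C`, then
`h x̄ + (γ/4) ‖y - x̄‖² ≤ h y` for all `y ∈ C`. -/
theorem stmt11 {X : Type*} [NormedAddCommGroup X] [NormedSpace ℝ X]
    (C : Set X) (hC : Convex ℝ C) (h : X → ℝ) (γ : ℝ) (hγ : 0 < γ)
    (hsq : ∀ x ∈ C, ∀ y ∈ C, ∀ t ∈ Icc (0 : ℝ) 1,
      h (x + t • (y - x)) ≤ max (h x) (h y) - γ / 2 * (t * (1 - t) * ‖y - x‖ ^ 2))
    (xbar : X) (hxbar : xbar ∈ C) (hmin : ∀ y ∈ C, h xbar ≤ h y) :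
    ∀ y ∈ C, h xbar + γ / 4 * ‖y - xbar‖ ^ 2 ≤ h y := by
  intro y hy
  have lim : Filter.Tendsto
      (fun n : ℕ => h xbar + γ / 4 * (1 - 1 / ((n : ℝ) + 1)) * ‖y - xbar‖ ^ 2)
      Filter.atTop (nhds (h xbar + γ / 4 * (1 - 0) * ‖y - xbar‖ ^ 2)) :=
    (((tendsto_one_div_add_atTop_nhds_zero_nat (𝕜 := ℝ)).const_sub 1).const_mul _
      |>.mul_const _).const_add _
  rw [sub_zero, mul_one] at lim
  refine le_of_tendsto' lim fun n => ?_
  have hb := grid_bound hC hsq hxbar hmin hy n.succ_pos (n + 1) le_rfl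
  have hn : ((n : ℝ) + 1) ≠ 0 := by positivity
  have e : ((n : ℝ) + 1) * ((n : ℝ) + 1 - 1) / ((n : ℝ) + 1) ^ 2 = 1 - 1 / ((n : ℝ) + 1) := by
    field_simp
  simpa only [Nat.succ_eq_add_one, Nat.cast_add, Nat.cast_one, e, div_self hn, one_smul,
    add_sub_cancel] using hb
end

section
/- Let F and g be continuous real-valued functions defined on an interval I ⊆ ℝ. If the upper Dini derivative of F satisfies F'₊(s) ≥ g(s) at every point s ∈ I, then for every closed interval [a, b] ⊆ I one has F(b) − F(a) ≥ ∫ₐᵇ g(s) ds. -/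
/-!
The claim is an instance of the fencing theorem
`image_le_of_liminf_slope_right_le_deriv_boundary`. The function `-F` and the barrier
`B x = -F a - ∫ₐˣ g` agree at `a`, the barrier has right derivative `-g`, and the hypothesis on the
upper Dini derivative of `F` says exactly that the lower right Dini derivative of `-F` is at most
`-g`. Hence `-F ≤ B` on `[a, b]`, which at `b` is the assertion. To differentiate the integral at
the endpoints as well, `g` is replaced by its continuous constant extension from `[a, b]` to `ℝ`.
-/

open Set Filter Topology

/-- **Saks' theorem.** Let `F` and `g` be continuous real functions on an
interval `I ⊆ ℝ`. If the upper Dini derivative `F'₊(s) = limsup_{t→0⁺} (F(s+t) - F s)/t`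
satisfies `F'₊(s) ≥ g s` at every `s ∈ I`, then for every closed interval
`[a, b] ⊆ I` we have `F b - F a ≥ ∫ₐᵇ g`. -/
theorem stmt12 (I : Set ℝ) (hI : I.OrdConnected) (F g : ℝ → ℝ)
    (hF : ContinuousOn F I) (hg : ContinuousOn g I)
    (hD : ∀ s ∈ I, ((g s : ℝ) : EReal) ≤
      Filter.limsup (fun t : ℝ => (((F (s + t) - F s) / t : ℝ) : EReal)) (𝓝[>] (0 : ℝ))) :
    ∀ a ∈ I, ∀ b ∈ I, a ≤ b → F b - F a ≥ ∫ s in a..b, g s := by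
  intro a ha b hb hab
  have hsub : Icc a b ⊆ I := hI.out ha hb
  set G : ℝ → ℝ := IccExtend hab ((Icc a b).domRestrict g)
  have hGc : Continuous G :=
    (continuousOn_iff_continuous_domRestrict.1 (hg.mono hsub)).Icc_extend'
  have hGg : ∀ x ∈ Icc a b, G x = g x := fun x hx => IccExtend_of_mem hab _ hx
  have hder : ∀ x, HasDerivAt (fun u => -F a - ∫ s in a..u, G s) (-G x) x := fun x => by
    simpa using (hGc.integral_hasStrictDerivAt a x).hasDerivAt.const_sub (-F a)
  have key := image_le_of_liminf_slope_right_le_deriv_boundary (f := fun x => -F x)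
    (B := fun u => -F a - ∫ s in a..u, G s) (B' := fun x => -G x) (a := a) (b := b)
    (hF.mono hsub).neg (by simp) (fun x _ => (hder x).continuousAt.continuousWithinAt)
    (fun x _ => (hder x).hasDerivWithinAt) (by
      intro x hx r hr
      have hxab : x ∈ Icc a b := Ico_subset_Icc_self hx
      have hlt : ((-r : ℝ) : EReal) < ((g x : ℝ) : EReal) := by
        rw [← hGg x hxab]
        exact_mod_cast neg_lt.1 hr
      have hfr := frequently_lt_of_lt_limsup (by isBoundedDefault)
        (hlt.trans_le (hD x (hsub hxab)))
      -- Translate the increment `t → 0⁺` to the point `z = x + t → x⁺`.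
      have hmap : map (fun t => x + t) (𝓝[>] (0 : ℝ)) = 𝓝[>] x := by
        simp
      rw [← hmap, frequently_map]
      refine hfr.mono fun t ht => ?_
      have ht' : -r < (F (x + t) - F x) / t := by exact_mod_cast ht
      have hs : slope (fun x => -F x) x (x + t) = -((F (x + t) - F x) / t) := by
        rw [slope_def_field, add_sub_cancel_left]
        ring
      rw [hs]
      linarith)
  have h := key (right_mem_Icc.2 hab)
  have hint : ∫ s in a..b, G s = ∫ s in a..b, g s :=
    intervalIntegral.integral_congr fun x hx => hGg x (by rwa [uIcc_of_le hab] at hx)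
  simp only [hint] at h
  linarith
end

section
/- Define g : [0,4] → ℝ by g(t) = −9 + (t − 1)²(t − 3)², and define κ : [0,4] → ℝ by κ(t) = 0 for t ∈ [0,4) and κ(4) = 1. Then: κ is nonnegative, not identically zero, κ(0) = 0, g is absolutely continuous with g(0) = 0 = g(4); and for all u, v ∈ [0,4] with g(u) ≥ g(4), the inequality g'(u)(u − v) ≥ κ(|u − v|)·|u − v| holds; yet g is not quasiconvex on [0,4], since g(1) = g(3) = −9 while g(2) = −8 > max{g(1), g(3)}. -/
/-!
With `p t = t² - 4t + 3 = (t - 1)(t - 3)` one has `g = -9 + p²`. On `[0,4]` the values of `p` lie in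
`[-1, 3]`, and `p = 3` only at the endpoints. Hence `g u ≥ g 4 = 0` forces `u = 0` or `u = 4`
(`eq_endpoint_of_nonneg`), where `g' = -24` and `g' = 24` respectively, so that
`g'(u) (u - v) = 24 |u - v|`; this dominates `κ |u - v| * |u - v|` because `κ ≤ 1`. Absolute
continuity follows from the Lipschitz bound with constant `24` (`quartic_lipschitz`). The points
`1`, `2`, `3` witness the failure of quasiconvexity.
-/

open Set

/-- Absolute continuity of `f` on the interval `[a, b]`: for every `ε > 0` there is
`δ > 0` such that for every finite family of nonoverlapping subintervals
`[c i, d i] ⊆ [a, b]` of total length `< δ`, the sum `∑ |f (d i) - f (c i)| < ε`. -/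
def AbsolutelyContinuousOn (f : ℝ → ℝ) (a b : ℝ) : Prop :=
  ∀ ε > 0, ∃ δ > 0, ∀ n : ℕ, ∀ c d : Fin n → ℝ,
    (∀ i, a ≤ c i ∧ c i ≤ d i ∧ d i ≤ b) →
    (Pairwise fun i j => Disjoint (Set.Ioo (c i) (d i)) (Set.Ioo (c j) (d j))) →
    (∑ i, (d i - c i)) < δ → (∑ i, |f (d i) - f (c i)|) < ε

/-- A Lipschitz function on `[a, b]` is absolutely continuous there. -/
lemma absolutelyContinuousOn_of_lipschitz {f : ℝ → ℝ} {a b K : ℝ} (hK : 0 < K)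
    (hf : ∀ c d, a ≤ c → c ≤ d → d ≤ b → |f d - f c| ≤ K * (d - c)) :
    AbsolutelyContinuousOn f a b := by
  intro ε hε
  refine ⟨ε / K, div_pos hε hK, fun n c d hcd _ hsum => ?_⟩
  calc ∑ i, |f (d i) - f (c i)| ≤ ∑ i, K * (d i - c i) :=
        Finset.sum_le_sum fun i _ => hf _ _ (hcd i).1 (hcd i).2.1 (hcd i).2.2
    _ = K * ∑ i, (d i - c i) := by rw [Finset.mul_sum]
    _ < K * (ε / K) := mul_lt_mul_of_pos_left hsum hK
    _ = ε := by field_simp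

lemma quartic_lipschitz {c d : ℝ} (hc : 0 ≤ c) (hcd : c ≤ d) (hd : d ≤ 4) :
    |(-9 + (d - 1) ^ 2 * (d - 3) ^ 2) - (-9 + (c - 1) ^ 2 * (c - 3) ^ 2)| ≤ 24 * (d - c) := by
  -- `p(d)² - p(c)² = (d - c) (d + c - 4) (p(d) + p(c))`, with factors bounded by `4` and `6`
  have key : (-9 + (d - 1) ^ 2 * (d - 3) ^ 2) - (-9 + (c - 1) ^ 2 * (c - 3) ^ 2)
      = ((d + c - 4) * ((d - 1) * (d - 3) + (c - 1) * (c - 3))) * (d - c) := by ring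
  have h1 : |d + c - 4| ≤ 4 := abs_le.2 ⟨by linarith, by linarith⟩
  have h2 : |(d - 1) * (d - 3) + (c - 1) * (c - 3)| ≤ 6 :=
    abs_le.2 ⟨by nlinarith [sq_nonneg (d - 2), sq_nonneg (c - 2)], by
      nlinarith [mul_nonneg (hc.trans hcd) (sub_nonneg.2 hd),
        mul_nonneg hc (sub_nonneg.2 (hcd.trans hd))]⟩
  rw [key, abs_mul, abs_mul, abs_of_nonneg (sub_nonneg.2 hcd)]
  refine mul_le_mul_of_nonneg_right ?_ (sub_nonneg.2 hcd)
  calc _ ≤ (4 : ℝ) * 6 := mul_le_mul h1 h2 (abs_nonneg _) (by norm_num)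
    _ = 24 := by norm_num

lemma eq_endpoint_of_nonneg {u : ℝ} (h0 : 0 ≤ u) (h4 : u ≤ 4)
    (h : 0 ≤ -9 + (u - 1) ^ 2 * (u - 3) ^ 2) : u = 0 ∨ u = 4 := by
  -- `-9 + p² = (p - 3) (p + 3) = -u (4 - u) ((u - 2)² + 2)`
  have h1 : 0 ≤ u * (4 - u) := mul_nonneg h0 (sub_nonneg.2 h4)
  have h2 : u * (4 - u) = 0 := by
    nlinarith [mul_nonneg h1 (sq_nonneg (u - 2))]
  rcases mul_eq_zero.1 h2 with h3 | h3
  · exact Or.inl h3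
  · exact Or.inr (by linarith)

lemma quartic_hasDerivAt (u : ℝ) :
    HasDerivAt (fun t : ℝ => -9 + (t - 1) ^ 2 * (t - 3) ^ 2)
      (4 * (u - 1) * (u - 2) * (u - 3)) u := by
  have h := ((((hasDerivAt_id u).sub_const 1).pow 2).mul
    (((hasDerivAt_id u).sub_const 3).pow 2)).const_add (-9)
  refine h.congr_deriv ?_
  simp
  ring

/-- With `g t = -9 + (t-1)² (t-3)²` on `[0,4]` and `κ = 0` on `[0,4)`,
`κ 4 = 1`: `κ` is nonnegative, not identically zero on `[0,4]`, `κ 0 = 0`; `g` is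
absolutely continuous with `g 0 = 0 = g 4`; for all `u, v ∈ [0,4]` with `g u ≥ g 4`,
`g'(u) (u - v) ≥ κ |u - v| ⬝ |u - v|`; yet `g` is not quasiconvex on `[0,4]`, since
`g 1 = g 3 = -9` while `g 2 = -8 > max (g 1) (g 3)`. -/
theorem stmt13 (g κ : ℝ → ℝ)
    (hg : ∀ t : ℝ, g t = -9 + (t - 1) ^ 2 * (t - 3) ^ 2)
    (hκ : (∀ t ∈ Ico (0 : ℝ) 4, κ t = 0) ∧ κ 4 = 1) :
    (∀ t ∈ Icc (0 : ℝ) 4, 0 ≤ κ t) ∧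
    (∃ t ∈ Icc (0 : ℝ) 4, κ t ≠ 0) ∧
    κ 0 = 0 ∧
    AbsolutelyContinuousOn g 0 4 ∧
    g 0 = 0 ∧ g 4 = 0 ∧
    (∀ u ∈ Icc (0 : ℝ) 4, ∀ v ∈ Icc (0 : ℝ) 4, g 4 ≤ g u →
      κ |u - v| * |u - v| ≤ deriv g u * (u - v)) ∧
    g 1 = -9 ∧ g 3 = -9 ∧ g 2 = -8 ∧ max (g 1) (g 3) < g 2 ∧
    ¬ (∀ x ∈ Icc (0 : ℝ) 4, ∀ y ∈ Icc (0 : ℝ) 4, ∀ t ∈ Icc (0 : ℝ) 1,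
        g (x + t * (y - x)) ≤ max (g x) (g y)) := by
  obtain ⟨hκ0, hκ4⟩ := hκ
  have hκb : ∀ t ∈ Icc (0 : ℝ) 4, 0 ≤ κ t ∧ κ t ≤ 1 := by
    intro t ht
    rcases ht.2.lt_or_eq with h | h
    · simp [hκ0 t ⟨ht.1, h⟩]
    · simp [h, hκ4]
  have g1 : g 1 = -9 := by rw [hg]; norm_num
  have g2 : g 2 = -8 := by rw [hg]; norm_num
  have g3 : g 3 = -9 := by rw [hg]; norm_num
  have g4 : g 4 = 0 := by rw [hg]; norm_num
  refine ⟨fun t ht => (hκb t ht).1, ⟨4, by norm_num, by rw [hκ4]; norm_num⟩,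
    hκ0 0 (by norm_num), ?_, by rw [hg]; norm_num, g4, ?_, g1, g3, g2, ?_, ?_⟩
  · refine absolutelyContinuousOn_of_lipschitz (K := 24) (by norm_num) fun c d hc hcd hd => ?_
    rw [hg, hg]
    exact quartic_lipschitz hc hcd hd
  · intro u hu v hv hguv
    have hderiv : deriv g u = 4 * (u - 1) * (u - 2) * (u - 3) := by
      rw [funext hg]
      exact (quartic_hasDerivAt u).deriv
    rw [g4, hg] at hguv
    rw [hderiv]
    have habs : |u - v| ∈ Icc (0 : ℝ) 4 :=
      ⟨abs_nonneg _, abs_le.2 ⟨by linarith [hu.1, hv.2], by linarith [hu.2, hv.1]⟩⟩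
    have hle : κ |u - v| * |u - v| ≤ 1 * |u - v| :=
      mul_le_mul_of_nonneg_right (hκb _ habs).2 habs.1
    refine hle.trans ?_
    rcases eq_endpoint_of_nonneg hu.1 hu.2 hguv with rfl | rfl
    · rw [abs_of_nonpos (by linarith [hv.1])]
      linarith [hv.1]
    · rw [abs_of_nonneg (by linarith [hv.2])]
      linarith [hv.2]
  · rw [g1, g2, g3]; norm_num
  · intro h
    have h' := h 1 (by norm_num) 3 (by norm_num) (1 / 2) (by norm_num)
    rw [show (1 : ℝ) + 1 / 2 * (3 - 1) = 2 by norm_num, g1, g2, g3] at h'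
    norm_num at h'
end
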